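/- Let A be a unital C*-algebra. For all b, c, d, e in A and every φ in the dual A*, the Jordan identity holds with the functional in the first slot: {φ,b,{c,d,e}} = {{φ,b,c},d,e} - {c,{b,φ,d},e} + {c,d,{φ,b,e}} (an equality of functionals on A). -/

import Mathlib

noncomputable section

variable {A : Type*} [NormedRing A] [StarRing A] [CStarRing A]
  [NormedAlgebra ℂ A] [CompleteSpace A] [StarModule ℂ A]

/-- The triple product `{a,b,c} = (a b* c + c b* a)/2` on a C*-algebra. -/
def tp (a b c : A) : A := (2 : ℂ)⁻¹ • (a * star b * c + c * star b * a)

/-- The module triple product `{a,b,φ} = {φ,b,a}`, given by `x ↦ φ({b,a,x})`. -/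
def tOut (a b : A) (φ : A → ℂ) : A → ℂ := fun x => φ (tp b a x)

/-- The module triple product `{a,φ,b}`, given by `x ↦ conj (φ ({a,x,b}))`. -/
def tMid (a : A) (φ : A → ℂ) (b : A) : A → ℂ := fun x => starRingEnd ℂ (φ (tp a x b))

/-- The adjoint functional `φ*(x) = conj (φ (x*))`. -/
def fstar (φ : A → ℂ) : A → ℂ := fun x => starRingEnd ℂ (φ (star x))

/-- The module action `a·φ : x ↦ φ(x a)`. -/
def actL (a : A) (φ : A → ℂ) : A → ℂ := fun x => φ (x * a)

/-- The module action `φ·a : x ↦ φ(a x)`. -/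
def actR (φ : A → ℂ) (a : A) : A → ℂ := fun x => φ (a * x)

/-- The commutator `[φ,a] = φ·a - a·φ : x ↦ φ(a x - x a)`. -/
def fcomm (φ : A → ℂ) (a : A) : A → ℂ := fun x => φ (a * x - x * a)

/-- The inner binary derivation `D_ψ(x) = ψ·x - x·ψ`, so `D_ψ(x)(y) = ψ(x y - y x)`. -/
def Dd (ψ : A → ℂ) (x : A) : A → ℂ := fun y => ψ (x * y - y * x)

/-!
Evaluated at `x`, the claim is the image under `φ` of the identity
`{b,{c,d,e},x} + {b,{c,x,e},d} = {b,c,{d,e,x}} + {b,e,{d,c,x}}` in `A`.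
It is the sum of two instances of the Jordan identity of `A`, for the operators `{d,e,·}` and
`{x,c,·}`, in which the remaining terms cancel by the symmetry of the triple product in its outer
variables.
-/

section TripleProduct

variable {R : Type*} [NormedRing R] [StarRing R] [NormedAlgebra ℂ R]

theorem tp_comm (a b c : R) : tp a b c = tp c b a := by
  rw [tp, tp, add_comm]

theorem tp_add_right (a b c d : R) : tp a b (c + d) = tp a b c + tp a b d := by
  simp only [tp, mul_add, add_mul]
  module

theorem tp_smul_right (z : ℂ) (a b c : R) : tp a b (z • c) = z • tp a b c := by
  simp only [tp, mul_smul_comm, smul_mul_assoc]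
  module

theorem tMid_tMid_apply (a b c d : R) (φ : R → ℂ) (x : R) :
    tMid a (tMid b φ c) d x = φ (tp b (tp a x d) c) :=
  Complex.conj_conj _

variable [StarModule ℂ R]

-- With `l = a b*` and `r = b* a`, we have `2 {a,b,y} = l y + y r` and `2 {b,a,d}* = d* l + r d*`,
-- so the words on the right with `l` or `r` in their interior cancel.
theorem tp_mul_star_mul (a b c d e : R) :
    tp a b (c * star d * e) =
      tp a b c * star d * e - c * star (tp b a d) * e + c * star d * tp a b e := by
  simp only [tp, star_smul, star_add, star_mul, star_star, star_inv₀, star_ofNat,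
    mul_add, add_mul, smul_add, smul_mul_assoc, mul_smul_comm, mul_assoc]
  abel

theorem tp_jordan_identity (a b c d e : R) :
    tp a b (tp c d e) = tp (tp a b c) d e - tp c (tp b a d) e + tp c d (tp a b e) := by
  calc tp a b ((2 : ℂ)⁻¹ • (c * star d * e + e * star d * c))
    _ = (2 : ℂ)⁻¹ • (tp a b (c * star d * e) + tp a b (e * star d * c)) := by
      rw [tp_smul_right, tp_add_right]
    _ = (2 : ℂ)⁻¹ • (tp a b c * star d * e + e * star d * tp a b c)
        - (2 : ℂ)⁻¹ • (c * star (tp b a d) * e + e * star (tp b a d) * c)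
        + (2 : ℂ)⁻¹ • (c * star d * tp a b e + tp a b e * star d * c) := by
      rw [tp_mul_star_mul, tp_mul_star_mul]
      module

theorem tp_tp_middle (b c d e x : R) :
    tp b (tp c d e) x = tp b c (tp d e x) - tp b (tp c x e) d + tp b e (tp d c x) := by
  have jordan_de : tp d e (tp b c x) =
      tp x c (tp b e d) - tp b (tp c d e) x + tp b c (tp d e x) := by
    rw [tp_jordan_identity d e b c x, tp_comm (tp d e b), tp_comm d e b, tp_comm e d c]
  have jordan_xc : tp x c (tp b e d) =
      tp d e (tp b c x) - tp b (tp c x e) d + tp b e (tp d c x) := by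
    rw [tp_jordan_identity x c b e d, tp_comm (tp x c b), tp_comm x c b, tp_comm x c d]
  calc tp b (tp c d e) x
    _ = tp b c (tp d e x) + tp x c (tp b e d) - tp d e (tp b c x) := by
      rw [jordan_de]
      abel
    _ = tp b c (tp d e x) - tp b (tp c x e) d + tp b e (tp d c x) := by
      rw [jordan_xc]
      abel

theorem jordan_identity_functional_first_slot_general {F : Type*} [FunLike F R ℂ]
    [AddMonoidHomClass F R ℂ] (b c d e : R) (φ : F) :
    tOut (tp c d e) b ⇑φ =
      tOut e d (tOut c b ⇑φ) - tMid c (tMid b ⇑φ d) e + tOut c d (tOut e b ⇑φ) := by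
  funext x
  calc φ (tp b (tp c d e) x)
    _ = φ (tp b c (tp d e x) - tp b (tp c x e) d + tp b e (tp d c x)) := by
      rw [tp_tp_middle]
    _ = φ (tp b c (tp d e x)) - φ (tp b (tp c x e) d) + φ (tp b e (tp d c x)) := by
      rw [map_add, map_sub]
    _ = φ (tp b c (tp d e x)) - tMid c (tMid b φ d) e x + φ (tp b e (tp d c x)) := by
      rw [tMid_tMid_apply]

end TripleProduct

/-- Jordan identity with the functional in the first slot:
`{φ,b,{c,d,e}} = {{φ,b,c},d,e} - {c,{b,φ,d},e} + {c,d,{φ,b,e}}`. -/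
theorem jordan_identity_functional_first_slot (b c d e : A) (φ : A →L[ℂ] ℂ) :
    tOut (tp c d e) b ⇑φ =
      tOut e d (tOut c b ⇑φ) - tMid c (tMid b ⇑φ d) e + tOut c d (tOut e b ⇑φ) :=
  jordan_identity_functional_first_slot_general b c d e φ
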